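/- arXiv:1404.7098 — 2 statements merged into one kernel-verified Lean document; each statement's English description precedes it below -/
import Mathlib

section
/- Fix μ>0. Let A be a real 5×5 matrix preserving the bilinear form ⟨·,·⟩₍₁,₄₎ (i.e. ⟨AW,AW′⟩₍₁,₄₎=⟨W,W′⟩₍₁,₄₎ for all W,W′) such that the 0-th component of A·X̂ is positive for every X∈ℝ⁴, and define T_A:ℝ⁴→ℝ⁴ by T_A(X) = ((A·X̂)¹,(A·X̂)²,(A·X̂)³,(A·X̂)⁴) (so that A·X̂ = (T_A(X))-hat). If φ:ℝ⁴→ℂ is smooth and □̃_μφ = 0 on ℝ⁴, then □̃_μ(φ∘T_A) = 0 on ℝ⁴. -/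
noncomputable section

/-- `N(X) = (x⁰)² + (x¹)² + (x²)² + (x³)²` for `X ∈ ℝ⁴`. -/
def Nq (X : Fin 4 → ℝ) : ℝ := ∑ i, X i ^ 2

/-- The indefinite inner product `⟨W,W′⟩₍₁,₄₎` on `ℝ⁵`. -/
def form14 (W W' : Fin 5 → ℝ) : ℝ :=
  W 0 * W' 0 - W 1 * W' 1 - W 2 * W' 2 - W 3 * W' 3 - W 4 * W' 4

/-- `X̂ = (√(μ⁻² + N(X)), x⁰, x¹, x², x³) ∈ ℝ⁵`. -/
def hat (μ : ℝ) (X : Fin 4 → ℝ) : Fin 5 → ℝ :=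
  Fin.cons (Real.sqrt ((μ ^ 2)⁻¹ + Nq X)) X

/-- The `i`-th standard basis vector of `ℝ⁴`. -/
def e4 (i : Fin 4) : Fin 4 → ℝ := Pi.single i 1

/-- The partial derivative `∂f/∂xⁱ` of a `ℂ`-valued function on `ℝ⁴`. -/
def pd (i : Fin 4) (f : (Fin 4 → ℝ) → ℂ) (X : Fin 4 → ℝ) : ℂ := fderiv ℝ f X (e4 i)

/-- The Laplacian `□f = Σᵢ ∂²f/∂(xⁱ)²`. -/
def lap (f : (Fin 4 → ℝ) → ℂ) (X : Fin 4 → ℝ) : ℂ := ∑ i, pd i (pd i f) X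

/-- The degree operator `deg f = Σᵢ xⁱ ∂f/∂xⁱ`. -/
def degOp (f : (Fin 4 → ℝ) → ℂ) (X : Fin 4 → ℝ) : ℂ := ∑ i, (X i : ℂ) * pd i f X

/-- The conformal Laplacian `□̃_μ f = □f + μ²(deg(deg f) + 3·deg f + 2f)`. -/
def boxTilde (μ : ℝ) (f : (Fin 4 → ℝ) → ℂ) (X : Fin 4 → ℝ) : ℂ :=
  lap f X + (μ ^ 2 : ℝ) * (degOp (degOp f) X + 3 * degOp f X + 2 * f X)

lemma e4_sum (v : Fin 4 → ℝ) : v = ∑ i, v i • e4 i := by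
  ext j
  simp [e4, Finset.sum_apply, Pi.single_apply]

lemma degOp_eq (f : (Fin 4 → ℝ) → ℂ) (X : Fin 4 → ℝ) : degOp f X = fderiv ℝ f X X := by
  conv_rhs => rw [e4_sum X]
  rw [map_sum]
  unfold degOp
  refine Finset.sum_congr rfl fun i _ => ?_
  rw [map_smul]
  conv_rhs => rw [← e4_sum X]
  simp [pd]

/-- coordinate-free form of the operator -/
lemma boxTilde_eq (μ : ℝ) (f : (Fin 4 → ℝ) → ℂ) (hf : ContDiff ℝ (⊤ : ℕ∞) f) (X : Fin 4 → ℝ) :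
    boxTilde μ f X = ∑ i, fderiv ℝ (fderiv ℝ f) X (e4 i) (e4 i)
      + (μ ^ 2 : ℝ) * (fderiv ℝ (fderiv ℝ f) X X X + 4 * fderiv ℝ f X X + 2 * f X) := by
  have hd : Differentiable ℝ (fderiv ℝ f) :=
    (hf.fderiv_right (m := 1) (by norm_cast)).differentiable (by norm_num)
  have h1 : lap f X = ∑ i, fderiv ℝ (fderiv ℝ f) X (e4 i) (e4 i) := by
    unfold lap
    refine Finset.sum_congr rfl fun i _ => ?_
    have : HasFDerivAt (pd i f) _ X := (hd X).hasFDerivAt.clm_apply (hasFDerivAt_const (e4 i) X)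
    rw [pd, this.fderiv]
    simp
  have h2 : degOp (degOp f) X = fderiv ℝ (fderiv ℝ f) X X X + fderiv ℝ f X X := by
    rw [degOp_eq]
    have e : degOp f = fun Y => fderiv ℝ f Y Y := funext (degOp_eq f)
    have : HasFDerivAt (fun Y => fderiv ℝ f Y Y) _ X :=
      (hd X).hasFDerivAt.clm_apply (hasFDerivAt_id X)
    rw [e, this.fderiv]
    simp [add_comm]
  rw [boxTilde, h1, h2, degOp_eq]
  ring

/-- dot product as a bilinear map -/
def dotL : (Fin 4 → ℝ) →L[ℝ] (Fin 4 → ℝ) →L[ℝ] ℝ :=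
  ∑ i : Fin 4, (ContinuousLinearMap.proj (R := ℝ) (φ := fun _ : Fin 4 => ℝ) i).smulRight
    (ContinuousLinearMap.proj (R := ℝ) (φ := fun _ : Fin 4 => ℝ) i)

lemma dotL_apply (u v : Fin 4 → ℝ) : dotL u v = ∑ i, u i * v i := by
  simp [dotL, ContinuousLinearMap.sum_apply]

/-- the square root -/
def rho (μ : ℝ) (X : Fin 4 → ℝ) : ℝ := Real.sqrt ((μ ^ 2)⁻¹ + Nq X)

lemma Nq_nonneg (X : Fin 4 → ℝ) : 0 ≤ Nq X := Finset.sum_nonneg fun i _ => sq_nonneg _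

lemma rad_pos (μ : ℝ) (hμ : 0 < μ) (X : Fin 4 → ℝ) : 0 < (μ ^ 2)⁻¹ + Nq X := by
  have := Nq_nonneg X
  positivity

lemma rho_pos' (μ : ℝ) (hμ : 0 < μ) (X : Fin 4 → ℝ) : 0 < rho μ X :=
  Real.sqrt_pos.2 (rad_pos μ hμ X)

lemma rho_sq (μ : ℝ) (hμ : 0 < μ) (X : Fin 4 → ℝ) : rho μ X ^ 2 = (μ ^ 2)⁻¹ + Nq X :=
  Real.sq_sqrt (rad_pos μ hμ X).le

lemma Nq_eq (X : Fin 4 → ℝ) : Nq X = dotL X X := by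
  simp [dotL_apply, Nq, pow_two]

lemma dotL_comm (u v : Fin 4 → ℝ) : dotL u v = dotL v u := by
  simp [dotL_apply, mul_comm]

lemma rho_contDiff (μ : ℝ) (hμ : 0 < μ) : ContDiff ℝ (⊤ : ℕ∞) (rho μ) := by
  unfold rho
  refine ContDiff.sqrt ?_ fun X => (rad_pos μ hμ X).ne'
  unfold Nq
  fun_prop

lemma rho_hasFDerivAt (μ : ℝ) (hμ : 0 < μ) (X : Fin 4 → ℝ) :
    HasFDerivAt (rho μ) ((rho μ X)⁻¹ • dotL X) X := by
  have h0 : HasFDerivAt (fun Y : Fin 4 → ℝ => dotL Y Y) _ X :=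
    dotL.hasFDerivAt.clm_apply (hasFDerivAt_id X)
  have h1 := (h0.const_add ((μ ^ 2)⁻¹)).sqrt (by rw [← Nq_eq]; exact (rad_pos μ hμ X).ne')
  have e : rho μ = fun Y => Real.sqrt ((μ ^ 2)⁻¹ + dotL Y Y) := by
    funext Y; rw [rho, Nq_eq]
  rw [e]
  refine h1.congr_fderiv ?_
  ext1 v
  simp [dotL_comm v X]
  ring

/-- The map in block form. -/
def Tm (μ : ℝ) (a : Fin 4 → ℝ) (B : (Fin 4 → ℝ) →L[ℝ] (Fin 4 → ℝ)) (X : Fin 4 → ℝ) :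
    Fin 4 → ℝ := rho μ X • a + B X

/-- Its derivative. -/
def Td (μ : ℝ) (a : Fin 4 → ℝ) (B : (Fin 4 → ℝ) →L[ℝ] (Fin 4 → ℝ)) (X v : Fin 4 → ℝ) :
    Fin 4 → ℝ := ((rho μ X)⁻¹ * dotL X v) • a + B v

lemma Tm_hasFDerivAt (μ : ℝ) (hμ : 0 < μ) (a : Fin 4 → ℝ)
    (B : (Fin 4 → ℝ) →L[ℝ] (Fin 4 → ℝ)) (X : Fin 4 → ℝ) :
    HasFDerivAt (Tm μ a B) (((rho μ X)⁻¹ • dotL X).smulRight a + B) X :=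
  ((rho_hasFDerivAt μ hμ X).smul_const a).add B.hasFDerivAt

lemma Td_hasFDerivAt (μ : ℝ) (hμ : 0 < μ) (a : Fin 4 → ℝ)
    (B : (Fin 4 → ℝ) →L[ℝ] (Fin 4 → ℝ)) (X v : Fin 4 → ℝ) :
    ∃ L : (Fin 4 → ℝ) →L[ℝ] (Fin 4 → ℝ), HasFDerivAt (fun Y => Td μ a B Y v) L X ∧
      ∀ u, L u = ((rho μ X)⁻¹ * dotL u v - (rho μ X)⁻¹ ^ 3 * dotL X u * dotL X v) • a := by
  have hs := (rho_pos' μ hμ X).ne'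
  have h1 := (hasDerivAt_inv hs).comp_hasFDerivAt X (rho_hasFDerivAt μ hμ X)
  have h2 : HasFDerivAt (fun Y : Fin 4 → ℝ => dotL Y v) _ X :=
    dotL.hasFDerivAt.clm_apply (hasFDerivAt_const v X)
  refine ⟨_, ((h1.mul h2).smul_const a).add_const (B v), fun u => ?_⟩
  simp
  congr 1
  field_simp
  ring

lemma fderiv_comp_T (μ : ℝ) (hμ : 0 < μ) (a : Fin 4 → ℝ)
    (B : (Fin 4 → ℝ) →L[ℝ] (Fin 4 → ℝ))
    (φ : (Fin 4 → ℝ) → ℂ) (hφ : ContDiff ℝ (⊤ : ℕ∞) φ) (X v : Fin 4 → ℝ) :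
    fderiv ℝ (fun Y => φ (Tm μ a B Y)) X v = fderiv ℝ φ (Tm μ a B X) (Td μ a B X v) := by
  have h := ((hφ.differentiable (by simp)) (Tm μ a B X)).hasFDerivAt.comp X
    (Tm_hasFDerivAt μ hμ a B X)
  have h' : fderiv ℝ (fun Y => φ (Tm μ a B Y)) X = _ := h.fderiv
  rw [h']
  simp [Td]

lemma fderiv2_comp_T (μ : ℝ) (hμ : 0 < μ) (a : Fin 4 → ℝ)
    (B : (Fin 4 → ℝ) →L[ℝ] (Fin 4 → ℝ))
    (φ : (Fin 4 → ℝ) → ℂ) (hφ : ContDiff ℝ (⊤ : ℕ∞) φ)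
    (hψ : ContDiff ℝ (⊤ : ℕ∞) (fun Y => φ (Tm μ a B Y))) (X u v : Fin 4 → ℝ) :
    fderiv ℝ (fderiv ℝ (fun Y => φ (Tm μ a B Y))) X u v =
      fderiv ℝ (fderiv ℝ φ) (Tm μ a B X) (Td μ a B X u) (Td μ a B X v)
      + ((rho μ X)⁻¹ * dotL u v - (rho μ X)⁻¹ ^ 3 * dotL X u * dotL X v : ℝ)
        * fderiv ℝ φ (Tm μ a B X) a := by
  have hd : Differentiable ℝ (fderiv ℝ φ) :=
    (hφ.fderiv_right (m := 1) (by norm_cast)).differentiable (by norm_num)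
  have hd' : Differentiable ℝ (fderiv ℝ (fun Y => φ (Tm μ a B Y))) :=
    (hψ.fderiv_right (m := 1) (by norm_cast)).differentiable (by norm_num)
  have h1 : HasFDerivAt (fun Y => fderiv ℝ (fun Y => φ (Tm μ a B Y)) Y v) _ X :=
    (hd' X).hasFDerivAt.clm_apply (hasFDerivAt_const v X)
  obtain ⟨L, hL, hLu⟩ := Td_hasFDerivAt μ hμ a B X v
  have h2 : HasFDerivAt (fun Y => fderiv ℝ φ (Tm μ a B Y) (Td μ a B Y v)) _ X :=
    ((hd (Tm μ a B X)).hasFDerivAt.comp X (Tm_hasFDerivAt μ hμ a B X)).clm_apply hL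
  have e : (fun Y => fderiv ℝ (fun Y => φ (Tm μ a B Y)) Y v)
      = (fun Y => fderiv ℝ φ (Tm μ a B Y) (Td μ a B Y v)) :=
    funext fun Y => fderiv_comp_T μ hμ a B φ hφ Y v
  rw [e] at h1
  have h3 := congrArg (fun l => l u) (h1.unique h2)
  simp only [ContinuousLinearMap.add_apply, ContinuousLinearMap.comp_apply,
    ContinuousLinearMap.flip_apply, hLu, map_smul] at h3
  simp at h3
  rw [h3]
  simp [Td]
  ring

lemma bilin_expand (Q : (Fin 4 → ℝ) →L[ℝ] (Fin 4 → ℝ) →L[ℝ] ℂ) (u v : Fin 4 → ℝ) :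
    Q u v = ∑ k, ∑ l, ((u k * v l : ℝ) : ℂ) * Q (e4 k) (e4 l) := by
  conv_lhs => rw [e4_sum u, e4_sum v]
  simp only [map_sum, ContinuousLinearMap.sum_apply, map_smul, ContinuousLinearMap.smul_apply]
  rw [Finset.sum_comm]
  simp [Finset.mul_sum, mul_assoc]
  try simp [mul_left_comm]

lemma tensor_id (μ : ℝ) (hμ : 0 < μ) (a : Fin 4 → ℝ)
    (B : (Fin 4 → ℝ) →L[ℝ] (Fin 4 → ℝ))
    (hB : ∀ k l, ∑ i, B (e4 i) k * B (e4 i) l = (if k = l then 1 else 0) + a k * a l)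
    (X : Fin 4 → ℝ) (k l : Fin 4) :
    ∑ i, Td μ a B X (e4 i) k * Td μ a B X (e4 i) l + μ ^ 2 * (Td μ a B X X k * Td μ a B X X l)
    = ∑ i, e4 i k * e4 i l + μ ^ 2 * (Tm μ a B X k * Tm μ a B X l) := by
  have hs := (rho_pos' μ hμ X).ne'
  have hN := rho_sq μ hμ X
  have hd : ∀ i, dotL X (e4 i) = X i := by
    intro i; simp [dotL_apply, e4, Pi.single_apply]
  have hb : ∀ k, B X k = ∑ i, X i * B (e4 i) k := by
    intro k
    conv_lhs => rw [e4_sum X]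
    simp [map_sum, Finset.sum_apply]
  have hee : ∑ i, e4 i k * e4 i l = if k = l then (1:ℝ) else 0 := by
    simp [e4, Pi.single_apply]
    try simp [eq_comm]
  have h1 : ∑ i, Td μ a B X (e4 i) k * Td μ a B X (e4 i) l
      = (rho μ X)⁻¹ ^ 2 * Nq X * a k * a l + (rho μ X)⁻¹ * (a k * B X l + a l * B X k)
        + ((if k = l then 1 else 0) + a k * a l) := by
    rw [← hB, hb k, hb l, Nq]
    simp only [Td, hd, Pi.add_apply, Pi.smul_apply, smul_eq_mul, Finset.mul_sum,
      Finset.sum_mul, ← Finset.sum_add_distrib]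
    refine Finset.sum_congr rfl fun i _ => ?_
    ring
  rw [h1, hee]
  simp only [Td, Tm, Pi.add_apply, Pi.smul_apply, smul_eq_mul, ← Nq_eq]
  have hN' : Nq X = rho μ X ^ 2 - (μ ^ 2)⁻¹ := by linarith
  rw [hN']
  field_simp
  ring

lemma main_block (μ : ℝ) (hμ : 0 < μ) (a : Fin 4 → ℝ)
    (B : (Fin 4 → ℝ) →L[ℝ] (Fin 4 → ℝ))
    (hB : ∀ k l, ∑ i, B (e4 i) k * B (e4 i) l = (if k = l then 1 else 0) + a k * a l)
    (φ : (Fin 4 → ℝ) → ℂ) (hφ : ContDiff ℝ (⊤ : ℕ∞) φ) (X : Fin 4 → ℝ) :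
    boxTilde μ (fun Y => φ (Tm μ a B Y)) X = boxTilde μ φ (Tm μ a B X) := by
  have hT : ContDiff ℝ (⊤ : ℕ∞) (Tm μ a B) :=
    ((rho_contDiff μ hμ).smul contDiff_const).add B.contDiff
  have hψ : ContDiff ℝ (⊤ : ℕ∞) (fun Y => φ (Tm μ a B Y)) := hφ.comp hT
  rw [boxTilde_eq μ _ hψ, boxTilde_eq μ _ hφ]
  simp only [fderiv2_comp_T μ hμ a B φ hφ hψ, fderiv_comp_T μ hμ a B φ hφ]
  set Q := fderiv ℝ (fderiv ℝ φ) (Tm μ a B X)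
  set P := fderiv ℝ φ (Tm μ a B X)
  have hs := (rho_pos' μ hμ X).ne'
  have hN := rho_sq μ hμ X
  have hQ : ∑ i, Q (Td μ a B X (e4 i)) (Td μ a B X (e4 i))
      + (μ ^ 2 : ℝ) * Q (Td μ a B X X) (Td μ a B X X)
      = ∑ i, Q (e4 i) (e4 i) + (μ ^ 2 : ℝ) * Q (Tm μ a B X) (Tm μ a B X) := by
    have gen : ∀ (w : Fin 4 → Fin 4 → ℝ) (z : Fin 4 → ℝ),
        ∑ i, Q (w i) (w i) + (μ ^ 2 : ℝ) * Q z z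
        = ∑ k, ∑ l, ((∑ i, w i k * w i l + μ ^ 2 * (z k * z l) : ℝ) : ℂ) * Q (e4 k) (e4 l) := by
      intro w z
      rw [bilin_expand Q z z, Finset.sum_congr rfl fun i _ => bilin_expand Q (w i) (w i)]
      rw [Finset.sum_comm, Finset.mul_sum, ← Finset.sum_add_distrib]
      refine Finset.sum_congr rfl fun k _ => ?_
      rw [Finset.sum_comm, Finset.mul_sum, ← Finset.sum_add_distrib]
      refine Finset.sum_congr rfl fun l _ => ?_
      rw [← Finset.sum_mul]
      push_cast
      ring
    rw [gen (fun i => Td μ a B X (e4 i)) (Td μ a B X X), gen e4 (Tm μ a B X)]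
    refine Finset.sum_congr rfl fun k _ => Finset.sum_congr rfl fun l _ => ?_
    rw [tensor_id μ hμ a B hB X k l]
  have hd : ∀ i, dotL X (e4 i) = X i := by
    intro i; simp [dotL_apply, e4, Pi.single_apply]
  have hde : ∀ i, dotL (e4 i) (e4 i) = 1 := by
    intro i; simp [dotL_apply, e4, Pi.single_apply]
  have hsum : ∑ i : Fin 4, ((rho μ X)⁻¹ * dotL (e4 i) (e4 i)
      - (rho μ X)⁻¹ ^ 3 * dotL X (e4 i) * dotL X (e4 i))
      = 4 * (rho μ X)⁻¹ - (rho μ X)⁻¹ ^ 3 * Nq X := by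
    simp only [hd, hde, Nq, Fin.sum_univ_four]
    ring
  have hPd : P (Td μ a B X X) = ((rho μ X)⁻¹ * Nq X : ℝ) * P a + P (B X) := by
    rw [Td, map_add, map_smul, ← Nq_eq]; simp
  have hPm : P (Tm μ a B X) = (rho μ X : ℝ) * P a + P (B X) := by
    rw [Tm, map_add, map_smul]; simp
  have key : (4 * (rho μ X)⁻¹ - (rho μ X)⁻¹ ^ 3 * Nq X)
      + μ ^ 2 * ((rho μ X)⁻¹ * Nq X - (rho μ X)⁻¹ ^ 3 * Nq X * Nq X)
      + 4 * μ ^ 2 * ((rho μ X)⁻¹ * Nq X) = 4 * μ ^ 2 * rho μ X := by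
    have hN' : Nq X = rho μ X ^ 2 - (μ ^ 2)⁻¹ := by linarith
    rw [hN']
    field_simp
    ring
  have keyC := congrArg (fun r : ℝ => (r : ℂ)) key
  rw [Finset.sum_add_distrib, ← Finset.sum_mul, ← Complex.ofReal_sum, hsum, hPd, hPm, ← Nq_eq]
  push_cast at keyC hQ ⊢
  linear_combination hQ + P a * keyC

lemma block_rel (A : Matrix (Fin 5) (Fin 5) ℝ)
    (hA : ∀ W W' : Fin 5 → ℝ, form14 (A.mulVec W) (A.mulVec W') = form14 W W') (k l : Fin 4) :
    ∑ i : Fin 4, A k.succ i.succ * A l.succ i.succ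
      = (if k = l then 1 else 0) + A k.succ 0 * A l.succ 0 := by
  let η : Matrix (Fin 5) (Fin 5) ℝ := Matrix.diagonal ![1, -1, -1, -1, -1]
  have hηη : η * η = 1 := by
    ext i j; fin_cases i <;> fin_cases j <;> simp [η, Matrix.one_apply]
  have h1 : A.transpose * η * A = η := by
    ext i j
    have h := hA (Pi.single i 1) (Pi.single j 1)
    simp only [form14, Matrix.mulVec_single_one, Matrix.col_apply] at h
    have hr : η i j = (Pi.single i 1 : Fin 5 → ℝ) 0 * (Pi.single j 1 : Fin 5 → ℝ) 0
      - (Pi.single i 1 : Fin 5 → ℝ) 1 * (Pi.single j 1 : Fin 5 → ℝ) 1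
      - (Pi.single i 1 : Fin 5 → ℝ) 2 * (Pi.single j 1 : Fin 5 → ℝ) 2
      - (Pi.single i 1 : Fin 5 → ℝ) 3 * (Pi.single j 1 : Fin 5 → ℝ) 3
      - (Pi.single i 1 : Fin 5 → ℝ) 4 * (Pi.single j 1 : Fin 5 → ℝ) 4 := by
      fin_cases i <;> fin_cases j <;> simp [η, Pi.single_apply]
    rw [hr, ← h]
    simp [Matrix.mul_apply, η, Matrix.diagonal_apply, Fin.sum_univ_five]
    ring
  have h2 : (η * A.transpose * η) * A = 1 := by
    rw [Matrix.mul_assoc, Matrix.mul_assoc, ← Matrix.mul_assoc A.transpose, h1, hηη]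
  have h3 : A * (η * A.transpose * η) = 1 := mul_eq_one_comm.1 h2
  have h4 : A * η * A.transpose = η := by
    calc A * η * A.transpose = A * (η * A.transpose * η) * η := by
          simp only [Matrix.mul_assoc, hηη, Matrix.mul_one]
      _ = η := by rw [h3, Matrix.one_mul]
  have h5 := congrFun (congrFun h4 k.succ) l.succ
  have h6 : η k.succ l.succ = -(if k = l then 1 else 0) := by
    fin_cases k <;> fin_cases l <;> simp [η]
  rw [h6] at h5
  simp [Matrix.mul_apply, η, Matrix.diagonal_apply, Fin.sum_univ_five] at h5
  rw [Fin.sum_univ_four]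
  simp only [Fin.succ_zero_eq_one, Fin.succ_one_eq_two, show Fin.succ (2 : Fin 4) = 3 from rfl,
    show Fin.succ (3 : Fin 4) = 4 from rfl]
  linarith

/-- If `A ∈ O(1,4)` maps the upper sheet of the hyperboloid `{⟨W,W⟩₍₁,₄₎ = μ⁻², w⁰ > 0}` to
itself, and `T_A : ℝ⁴ → ℝ⁴` is the induced map (`A·X̂ = (T_A X)-hat`), then `□̃_μφ = 0` implies
`□̃_μ(φ ∘ T_A) = 0`. -/
theorem stmt3 (μ : ℝ) (hμ : 0 < μ) (A : Matrix (Fin 5) (Fin 5) ℝ)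
    (hA : ∀ W W' : Fin 5 → ℝ, form14 (A.mulVec W) (A.mulVec W') = form14 W W')
    (hpos : ∀ X : Fin 4 → ℝ, 0 < A.mulVec (hat μ X) 0)
    (φ : (Fin 4 → ℝ) → ℂ) (hφ : ContDiff ℝ (⊤ : ℕ∞) φ)
    (hsol : ∀ X, boxTilde μ φ X = 0) :
    ∀ X, boxTilde μ (fun X' => φ (fun i : Fin 4 => A.mulVec (hat μ X') i.succ)) X = 0 := by
  intro X
  let a : Fin 4 → ℝ := fun k => A k.succ 0
  let M : Matrix (Fin 4) (Fin 4) ℝ := Matrix.of fun k i => A k.succ i.succ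
  let B : (Fin 4 → ℝ) →L[ℝ] (Fin 4 → ℝ) := LinearMap.toContinuousLinearMap (Matrix.toLin' M)
  have hBe : ∀ i k, B (e4 i) k = A k.succ i.succ := by
    intro i k
    simp [B, e4, M]
  have hT : ∀ Y, (fun i : Fin 4 => A.mulVec (hat μ Y) i.succ) = Tm μ a B Y := by
    intro Y
    ext i
    simp [Tm, B, a, M, hat, rho, Matrix.mulVec, dotProduct, Fin.sum_univ_succ]
    ring
  have hB : ∀ k l, ∑ i, B (e4 i) k * B (e4 i) l = (if k = l then 1 else 0) + a k * a l := by
    intro k l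
    simp only [hBe]
    exact block_rel A hA k l
  simp only [hT]
  rw [main_block μ hμ a B hB φ hφ X]
  exact hsol _
end
end

section
/- Fix μ>0, let l ∈ {0, 1/2, 1, 3/2, …} and m,n ∈ {−l, −l+1, …, l}. Then the function φ⁺(X) = t^l_{n m̲}(X) / ((1+μ²N(X))^{1/2} + 1)^{2l+1} satisfies □̃_μ φ⁺ = 0 on all of ℝ⁴, and the function φ⁻(X) = t^l_{n m̲}(X) / ((1+μ²N(X))^{1/2} − 1)^{2l+1} satisfies □̃_μ φ⁻ = 0 on ℝ⁴∖{0}. -/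
noncomputable section

/-- The matrix `Z(V) = [[v⁰−iv³, −iv¹−v²],[−iv¹+v², v⁰+iv³]]` with `det Z(V) = N(V)`. -/
def Zmat (V : Fin 4 → ℂ) : Matrix (Fin 2) (Fin 2) ℂ :=
  !![V 0 - Complex.I * V 3, -Complex.I * V 1 - V 2;
     -Complex.I * V 1 + V 2, V 0 + Complex.I * V 3]

/-- The matrix coefficient `t^l_{n m̲}(Z)`: here `p = 2l`, `a = l−m`, `b = l−n`, and
`tcoef p a b Z` is the coefficient of `s^b` in `(s z₁₁+z₂₁)^a (s z₁₂+z₂₂)^{p−a}`. -/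
def tcoef (p a b : ℕ) (Z : Matrix (Fin 2) (Fin 2) ℂ) : ℂ :=
  ((Polynomial.C (Z 0 0) * Polynomial.X + Polynomial.C (Z 1 0)) ^ a *
   (Polynomial.C (Z 0 1) * Polynomial.X + Polynomial.C (Z 1 1)) ^ (p - a)).coeff b

/-- `t^l_{n m̲}(X)` for `X ∈ ℝ⁴`. -/
def tcoefR (p a b : ℕ) (X : Fin 4 → ℝ) : ℂ := tcoef p a b (Zmat fun i => (X i : ℂ))


lemma pd_mul' (i : Fin 4) (f g : (Fin 4 → ℝ) → ℂ) (X : Fin 4 → ℝ)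
    (hf : DifferentiableAt ℝ f X) (hg : DifferentiableAt ℝ g X) :
    pd i (fun Y => f Y * g Y) X = pd i f X * g X + f X * pd i g X := by
  unfold pd
  rw [fderiv_fun_mul hf hg]
  simp
  ring

lemma pd_add' (i : Fin 4) (f g : (Fin 4 → ℝ) → ℂ) (X : Fin 4 → ℝ)
    (hf : DifferentiableAt ℝ f X) (hg : DifferentiableAt ℝ g X) :
    pd i (fun Y => f Y + g Y) X = pd i f X + pd i g X := by
  unfold pd
  rw [fderiv_fun_add hf hg]
  simp

lemma pd_congr (i : Fin 4) (f g : (Fin 4 → ℝ) → ℂ) (X : Fin 4 → ℝ)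
    (h : f =ᶠ[nhds X] g) : pd i f X = pd i g X := by
  unfold pd
  rw [h.fderiv_eq]

lemma pd_coord (i j : Fin 4) (X : Fin 4 → ℝ) :
    pd i (fun Y => ((Y j : ℝ) : ℂ)) X = if j = i then 1 else 0 := by
  unfold pd
  have h : HasFDerivAt (fun Y : Fin 4 → ℝ => ((Y j : ℝ) : ℂ))
      (Complex.ofRealCLM.comp (ContinuousLinearMap.proj (R := ℝ) (φ := fun _ : Fin 4 => ℝ) j)) X :=
    (Complex.ofRealCLM.comp
      (ContinuousLinearMap.proj (R := ℝ) (φ := fun _ : Fin 4 => ℝ) j)).hasFDerivAt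
  rw [h.fderiv]
  by_cases hji : j = i
  · subst hji; simp [e4]
  · simp [e4, hji]

lemma diff_coord (j : Fin 4) : Differentiable ℝ (fun Y : Fin 4 → ℝ => ((Y j : ℝ) : ℂ)) := by
  fun_prop

/-- `Y ↦ h(N(Y))` as a complex function. -/
def KN (h : ℝ → ℝ) (Y : Fin 4 → ℝ) : ℂ := ((h (Nq Y) : ℝ) : ℂ)

lemma hasFDerivAt_Nq (X : Fin 4 → ℝ) :
    HasFDerivAt Nq (∑ i, (2 * X i) •
      (ContinuousLinearMap.proj (R := ℝ) (φ := fun _ : Fin 4 => ℝ) i)) X := by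
  unfold Nq
  refine HasFDerivAt.fun_sum fun i _ => ?_
  have h := (hasFDerivAt_apply (𝕜 := ℝ) i X).pow 2
  simpa using h

lemma hasFDerivAt_KN (h : ℝ → ℝ) (h' : ℝ) (X : Fin 4 → ℝ) (hh : HasDerivAt h h' (Nq X)) :
    HasFDerivAt (KN h) (Complex.ofRealCLM.comp (h' • (∑ i, (2 * X i) •
      (ContinuousLinearMap.proj (R := ℝ) (φ := fun _ : Fin 4 => ℝ) i)))) X := by
  have h1 := hh.comp_hasFDerivAt X (hasFDerivAt_Nq X)
  exact Complex.ofRealCLM.hasFDerivAt.comp X h1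

lemma pd_KN (i : Fin 4) (h : ℝ → ℝ) (h' : ℝ) (X : Fin 4 → ℝ) (hh : HasDerivAt h h' (Nq X)) :
    pd i (KN h) X = (h' : ℂ) * (2 * (X i : ℂ)) := by
  unfold pd
  rw [(hasFDerivAt_KN h h' X hh).fderiv]
  simp [e4, Pi.single_apply]

lemma Nq_cast (X : Fin 4 → ℝ) :
    ((Nq X : ℝ) : ℂ) = (X 0 : ℂ) ^ 2 + (X 1 : ℂ) ^ 2 + (X 2 : ℂ) ^ 2 + (X 3 : ℂ) ^ 2 := by
  simp [Nq, Fin.sum_univ_four]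

lemma degOp_mul_KN (p : ℕ) (T : (Fin 4 → ℝ) → ℂ) (hT : Differentiable ℝ T)
    (hdeg : ∀ Y, degOp T Y = p * T Y) (h : ℝ → ℝ) (h' : ℝ) (X : Fin 4 → ℝ)
    (hh : HasDerivAt h h' (Nq X)) :
    degOp (fun Y => T Y * KN h Y) X
      = T X * ((p * h (Nq X) + 2 * Nq X * h' : ℝ) : ℂ) := by
  have hd := hdeg X
  unfold degOp at hd ⊢
  have e : ∀ i, pd i (fun Y => T Y * KN h Y) X
      = pd i T X * KN h X + T X * ((h' : ℂ) * (2 * (X i : ℂ))) := fun i => by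
    rw [pd_mul' i T (KN h) X (hT X) (hasFDerivAt_KN h h' X hh).differentiableAt, pd_KN i h h' X hh]
  simp only [e, Fin.sum_univ_four] at hd ⊢
  push_cast
  rw [Nq_cast]
  have : KN h X = (h (Nq X) : ℂ) := rfl
  rw [this]
  linear_combination (h (Nq X) : ℂ) * hd

lemma continuous_Nq : Continuous Nq := by
  unfold Nq; fun_prop

lemma degOp_congr (f g : (Fin 4 → ℝ) → ℂ) (X : Fin 4 → ℝ)
    (h : f =ᶠ[nhds X] g) : degOp f X = degOp g X := by
  unfold degOp
  exact Finset.sum_congr rfl fun i _ => by rw [pd_congr i f g X h]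

lemma boxTilde_mul_KN (μ : ℝ) (p : ℕ) (T : (Fin 4 → ℝ) → ℂ) (hT : Differentiable ℝ T)
    (hT' : ∀ i, Differentiable ℝ (pd i T))
    (hdeg : ∀ Y, degOp T Y = p * T Y) (hlap : ∀ Y, lap T Y = 0)
    (V : Set ℝ) (hV : IsOpen V) (h h1 h2 : ℝ → ℝ)
    (hh : ∀ s ∈ V, HasDerivAt h (h1 s) s) (hh1 : ∀ s ∈ V, HasDerivAt h1 (h2 s) s)
    (X : Fin 4 → ℝ) (hX : Nq X ∈ V)
    (key : ∀ s ∈ V, 4 * (p + 2) * h1 s + 4 * s * h2 s +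
      μ ^ 2 * ((p * (p * h s + 2 * s * h1 s) + 2 * s * (p * h1 s + 2 * h1 s + 2 * s * h2 s))
        + 3 * (p * h s + 2 * s * h1 s) + 2 * h s) = 0) :
    boxTilde μ (fun Y => T Y * KN h Y) X = 0 := by
  have hev : ∀ᶠ Y in nhds X, Nq Y ∈ V := continuous_Nq.continuousAt.eventually (hV.mem_nhds hX)
  have hdd : degOp (degOp (fun Y => T Y * KN h Y)) X
      = T X * ((p * (p * h (Nq X) + 2 * Nq X * h1 (Nq X))
        + 2 * Nq X * (p * h1 (Nq X) + 2 * h1 (Nq X) + 2 * Nq X * h2 (Nq X)) : ℝ) : ℂ) := by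
    have e : degOp (fun Y => T Y * KN h Y) =ᶠ[nhds X]
        fun Y => T Y * KN (fun s => p * h s + 2 * s * h1 s) Y := by
      filter_upwards [hev] with Y hY
      exact degOp_mul_KN p T hT hdeg h _ Y (hh _ hY)
    rw [degOp_congr _ _ X e]
    refine degOp_mul_KN p T hT hdeg (fun s => p * h s + 2 * s * h1 s) _ X ?_
    have a1 := (hh _ hX).const_mul (p : ℝ)
    have a2 := ((hasDerivAt_id (Nq X)).const_mul 2).mul (hh1 _ hX)
    refine (a1.add a2).congr_deriv ?_
    simp only [id]
    ring
  have hl : lap (fun Y => T Y * KN h Y) X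
      = T X * ((4 * (p + 2) * h1 (Nq X) + 4 * Nq X * h2 (Nq X) : ℝ) : ℂ) := by
    have e : ∀ i, pd i (pd i (fun Y => T Y * KN h Y)) X
        = pd i (pd i T) X * KN h X + pd i T X * ((h1 (Nq X) : ℂ) * (2 * (X i : ℂ)))
          + (pd i T X * (2 * (X i : ℂ) * KN h1 X)
            + T X * (2 * KN h1 X + 2 * (X i : ℂ) * ((h2 (Nq X) : ℂ) * (2 * (X i : ℂ))))) := by
      intro i
      have e1 : pd i (fun Y => T Y * KN h Y) =ᶠ[nhds X]
          fun Y => pd i T Y * KN h Y + T Y * ((2 * (Y i : ℂ)) * KN h1 Y) := by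
        filter_upwards [hev] with Y hY
        rw [pd_mul' i T (KN h) Y (hT Y) (hasFDerivAt_KN h _ Y (hh _ hY)).differentiableAt,
          pd_KN i h _ Y (hh _ hY)]
        simp only [KN]
        ring
      have dK := (hasFDerivAt_KN h _ X (hh _ hX)).differentiableAt
      have dK1 := (hasFDerivAt_KN h1 _ X (hh1 _ hX)).differentiableAt
      have d2 : DifferentiableAt ℝ (fun Y : Fin 4 → ℝ => (2 * (Y i : ℂ))) X := by fun_prop
      have p2 : pd i (fun Y : Fin 4 → ℝ => (2 * (Y i : ℂ))) X = 2 := by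
        rw [pd_mul' i (fun _ => 2) (fun Y : Fin 4 → ℝ => (Y i : ℂ)) X (by fun_prop) (by fun_prop),
          pd_coord]
        simp [pd]
      rw [pd_congr i _ _ X e1,
        pd_add' i (fun Y => pd i T Y * KN h Y) (fun Y => T Y * ((2 * (Y i : ℂ)) * KN h1 Y)) X
          ((hT' i X).mul dK) ((hT X).mul (d2.mul dK1)),
        pd_mul' i (pd i T) (KN h) X (hT' i X) dK,
        pd_mul' i T (fun Y => (2 * (Y i : ℂ)) * KN h1 Y) X (hT X) (d2.mul dK1),
        pd_mul' i (fun Y => (2 * (Y i : ℂ))) (KN h1) X d2 dK1,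
        pd_KN i h _ X (hh _ hX), pd_KN i h1 _ X (hh1 _ hX), p2]
    have hd := hdeg X
    have hl := hlap X
    unfold degOp at hd
    unfold lap at hl ⊢
    simp only [e, Fin.sum_univ_four] at hd hl ⊢
    push_cast
    rw [Nq_cast]
    have k1 : KN h1 X = (h1 (Nq X) : ℂ) := rfl
    rw [k1]
    linear_combination KN h X * hl + 4 * (h1 (Nq X) : ℂ) * hd
  unfold boxTilde
  rw [hdd, hl, degOp_mul_KN p T hT hdeg h _ X (hh _ hX)]
  have k0 : KN h X = (h (Nq X) : ℂ) := rfl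
  have k := congrArg (fun r : ℝ => (r : ℂ)) (key _ hX)
  beta_reduce
  rw [k0]
  push_cast at k ⊢
  linear_combination T X * k

/-- `G'` is the coefficientwise `i`-th partial derivative of the polynomial-valued `G`. -/
def HasP (i : Fin 4) (G G' : (Fin 4 → ℝ) → Polynomial ℂ) : Prop :=
  ∀ b, Differentiable ℝ (fun Y => (G Y).coeff b) ∧
    ∀ Y, pd i (fun Y => (G Y).coeff b) Y = (G' Y).coeff b

lemma HasP.const (i : Fin 4) (c : Polynomial ℂ) : HasP i (fun _ => c) (fun _ => 0) := by
  intro b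
  exact ⟨differentiable_const _, fun Y => by simp [pd]⟩

lemma HasP.add {i : Fin 4} {G G' H H' : (Fin 4 → ℝ) → Polynomial ℂ}
    (hG : HasP i G G') (hH : HasP i H H') :
    HasP i (fun Y => G Y + H Y) (fun Y => G' Y + H' Y) := by
  intro b
  simp only [Polynomial.coeff_add]
  refine ⟨(hG b).1.add (hH b).1, fun Y => ?_⟩
  rw [pd_add' i _ _ Y ((hG b).1 Y) ((hH b).1 Y), (hG b).2, (hH b).2]

lemma HasP.mul {i : Fin 4} {G G' H H' : (Fin 4 → ℝ) → Polynomial ℂ}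
    (hG : HasP i G G') (hH : HasP i H H') :
    HasP i (fun Y => G Y * H Y) (fun Y => G' Y * H Y + G Y * H' Y) := by
  intro b
  simp only [Polynomial.coeff_mul, Polynomial.coeff_add]
  have d : ∀ x : ℕ × ℕ, Differentiable ℝ (fun Y => (G Y).coeff x.1 * (H Y).coeff x.2) :=
    fun x => (hG x.1).1.mul (hH x.2).1
  refine ⟨Differentiable.fun_sum fun x _ => d x, fun Y => ?_⟩
  have : pd i (fun Y => ∑ x ∈ Finset.HasAntidiagonal.antidiagonal b, (G Y).coeff x.1 * (H Y).coeff x.2) Y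
      = ∑ x ∈ Finset.HasAntidiagonal.antidiagonal b, pd i (fun Y => (G Y).coeff x.1 * (H Y).coeff x.2) Y := by
    unfold pd
    rw [fderiv_fun_sum fun x _ => d x Y]
    simp
  rw [this, ← Finset.sum_add_distrib]
  refine Finset.sum_congr rfl fun x _ => ?_
  rw [pd_mul' i _ _ Y ((hG x.1).1 Y) ((hH x.2).1 Y), (hG x.1).2, (hH x.2).2]

lemma HasP.congr {i : Fin 4} {G G' H' : (Fin 4 → ℝ) → Polynomial ℂ}
    (hG : HasP i G G') (h : ∀ Y, G' Y = H' Y) : HasP i G H' := by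
  have : G' = H' := funext h
  rwa [← this]

lemma HasP.pow {i : Fin 4} {G G' : (Fin 4 → ℝ) → Polynomial ℂ}
    (hG : HasP i G G') (k : ℕ) :
    HasP i (fun Y => G Y ^ k) (fun Y => (k : Polynomial ℂ) * G Y ^ (k - 1) * G' Y) := by
  induction k with
  | zero => simpa using HasP.const i 1
  | succ k ih =>
    simp only [pow_succ]
    refine (ih.mul hG).congr fun Y => ?_
    rcases k with _ | k
    · simp
    · simp only [Nat.add_sub_cancel, pow_succ]
      push_cast
      ring

/-- The first linear factor. -/
def PP (Y : Fin 4 → ℝ) : Polynomial ℂ :=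
  Polynomial.C ((Y 0 : ℂ) - Complex.I * Y 3) * Polynomial.X
    + Polynomial.C (-Complex.I * Y 1 + Y 2)

/-- The second linear factor. -/
def QQ (Y : Fin 4 → ℝ) : Polynomial ℂ :=
  Polynomial.C (-Complex.I * Y 1 - Y 2) * Polynomial.X
    + Polynomial.C ((Y 0 : ℂ) + Complex.I * Y 3)

/-- Partial derivatives of the first factor. -/
def Pd : Fin 4 → Polynomial ℂ :=
  ![Polynomial.X, -Polynomial.C Complex.I, 1, -Polynomial.C Complex.I * Polynomial.X]

/-- Partial derivatives of the second factor. -/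
def Qd : Fin 4 → Polynomial ℂ :=
  ![1, -Polynomial.C Complex.I * Polynomial.X, -Polynomial.X, Polynomial.C Complex.I]

lemma PP_eq (Y : Fin 4 → ℝ) : PP Y = ∑ j, Polynomial.C (Y j : ℂ) * Pd j := by
  simp [PP, Pd, Fin.sum_univ_four]
  ring

lemma QQ_eq (Y : Fin 4 → ℝ) : QQ Y = ∑ j, Polynomial.C (Y j : ℂ) * Qd j := by
  simp [QQ, Qd, Fin.sum_univ_four]
  ring

lemma HasP_lin (i : Fin 4) (D : Fin 4 → Polynomial ℂ) :
    HasP i (fun Y => ∑ j, Polynomial.C (Y j : ℂ) * D j) (fun _ => D i) := by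
  have hc : ∀ j, HasP i (fun Y => Polynomial.C (Y j : ℂ)) (fun _ => if j = i then 1 else 0) := by
    intro j b
    rcases b with _ | b
    · simp only [Polynomial.coeff_C_zero]
      refine ⟨diff_coord j, fun Y => ?_⟩
      rw [pd_coord]
      split_ifs <;> simp
    · simp only [Polynomial.coeff_C_succ]
      refine ⟨by fun_prop, fun Y => ?_⟩
      split_ifs <;> simp [pd, Polynomial.coeff_one]
  have hm := fun j => (hc j).mul (HasP.const i (D j))
  simp only [Fin.sum_univ_four]
  refine ((((hm 0).add (hm 1)).add (hm 2)).add (hm 3)).congr fun Y => ?_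
  fin_cases i <;> simp

lemma CI_sq : (Polynomial.C Complex.I : Polynomial ℂ) ^ 2 = -1 := by
  rw [← Polynomial.C_pow, Complex.I_sq]; simp

lemma Pd_sq : ∑ i, Pd i ^ 2 = 0 := by
  simp [Pd, Fin.sum_univ_four]
  linear_combination (1 + Polynomial.X ^ 2) * CI_sq

lemma Qd_sq : ∑ i, Qd i ^ 2 = 0 := by
  simp [Qd, Fin.sum_univ_four]
  linear_combination (1 + Polynomial.X ^ 2) * CI_sq

lemma PQd : ∑ i, Pd i * Qd i = 0 := by
  simp [Pd, Qd, Fin.sum_univ_four]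
  ring

lemma HasP_PP (i : Fin 4) : HasP i PP (fun _ => Pd i) := by
  have : PP = fun Y => ∑ j, Polynomial.C (Y j : ℂ) * Pd j := funext PP_eq
  rw [this]; exact HasP_lin i Pd

lemma HasP_QQ (i : Fin 4) : HasP i QQ (fun _ => Qd i) := by
  have : QQ = fun Y => ∑ j, Polynomial.C (Y j : ℂ) * Qd j := funext QQ_eq
  rw [this]; exact HasP_lin i Qd

/-- The first derivative of `P^a Q^c`. -/
def G1 (a c : ℕ) (i : Fin 4) (Y : Fin 4 → ℝ) : Polynomial ℂ :=
  ((a : Polynomial ℂ) * PP Y ^ (a - 1) * Pd i) * QQ Y ^ c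
    + PP Y ^ a * ((c : Polynomial ℂ) * QQ Y ^ (c - 1) * Qd i)

/-- The second derivative of `P^a Q^c`. -/
def G2 (a c : ℕ) (i : Fin 4) (Y : Fin 4 → ℝ) : Polynomial ℂ :=
  (a : Polynomial ℂ) * ((a - 1 : ℕ) : Polynomial ℂ) * PP Y ^ (a - 1 - 1) * QQ Y ^ c * Pd i ^ 2
    + 2 * a * c * PP Y ^ (a - 1) * QQ Y ^ (c - 1) * (Pd i * Qd i)
    + (c : Polynomial ℂ) * ((c - 1 : ℕ) : Polynomial ℂ) * PP Y ^ a * QQ Y ^ (c - 1 - 1) * Qd i ^ 2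

lemma HasP_G (a c : ℕ) (i : Fin 4) : HasP i (fun Y => PP Y ^ a * QQ Y ^ c) (G1 a c i) :=
  ((HasP_PP i).pow a).mul ((HasP_QQ i).pow c)

lemma HasP_G1 (a c : ℕ) (i : Fin 4) : HasP i (G1 a c i) (G2 a c i) := by
  have hp := ((HasP.const i (a : Polynomial ℂ)).mul ((HasP_PP i).pow (a - 1))).mul
    (HasP.const i (Pd i))
  have hq := ((HasP.const i (c : Polynomial ℂ)).mul ((HasP_QQ i).pow (c - 1))).mul
    (HasP.const i (Qd i))
  refine ((hp.mul ((HasP_QQ i).pow c)).add (((HasP_PP i).pow a).mul hq)).congr fun Y => ?_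
  simp only [G2]
  ring

lemma G2_sum (a c : ℕ) (Y : Fin 4 → ℝ) : ∑ i, G2 a c i Y = 0 := by
  simp only [G2, Finset.sum_add_distrib, ← Finset.mul_sum, Pd_sq, Qd_sq, PQd]
  simp

lemma G1_euler (a c : ℕ) (Y : Fin 4 → ℝ) :
    ∑ i, Polynomial.C (Y i : ℂ) * G1 a c i Y
      = ((a + c : ℕ) : Polynomial ℂ) * (PP Y ^ a * QQ Y ^ c) := by
  have h : ∑ i, Polynomial.C (Y i : ℂ) * G1 a c i Y
      = (a : Polynomial ℂ) * PP Y ^ (a - 1) * QQ Y ^ c * PP Y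
        + PP Y ^ a * (c : Polynomial ℂ) * QQ Y ^ (c - 1) * QQ Y := by
    conv_rhs => rw [PP_eq Y, QQ_eq Y]
    rw [← PP_eq, ← QQ_eq]
    nth_rewrite 2 [PP_eq Y]
    nth_rewrite 3 [QQ_eq Y]
    simp only [G1, Fin.sum_univ_four]
    ring
  rw [h]
  rcases a with _ | a <;> rcases c with _ | c <;> simp [pow_succ] <;> ring

lemma tcoefR_eq (p a b : ℕ) :
    tcoefR p a b = fun Y => (PP Y ^ a * QQ Y ^ (p - a)).coeff b := by
  funext Y
  simp [tcoefR, tcoef, Zmat, PP, QQ]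

lemma T_diff (p a b : ℕ) : Differentiable ℝ (tcoefR p a b) := by
  rw [tcoefR_eq]; exact (HasP_G a (p - a) 0 b).1

lemma T_pd (p a b : ℕ) (i : Fin 4) :
    pd i (tcoefR p a b) = fun Y => (G1 a (p - a) i Y).coeff b := by
  rw [tcoefR_eq]; funext Y; exact (HasP_G a (p - a) i b).2 Y

lemma T_pd_diff (p a b : ℕ) (i : Fin 4) : Differentiable ℝ (pd i (tcoefR p a b)) := by
  rw [T_pd]; exact (HasP_G1 a (p - a) i b).1

lemma T_lap (p a b : ℕ) (Y : Fin 4 → ℝ) : lap (tcoefR p a b) Y = 0 := by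
  unfold lap
  have : ∀ i, pd i (pd i (tcoefR p a b)) Y = (G2 a (p - a) i Y).coeff b := fun i => by
    rw [T_pd]; exact (HasP_G1 a (p - a) i b).2 Y
  simp only [this]
  rw [← Polynomial.finsetSum_coeff, G2_sum]
  simp

lemma T_deg (p a b : ℕ) (ha : a ≤ p) (Y : Fin 4 → ℝ) :
    degOp (tcoefR p a b) Y = p * tcoefR p a b Y := by
  unfold degOp
  simp only [T_pd]
  have := congrArg (fun q => Polynomial.coeff q b) (G1_euler a (p - a) Y)
  simp only [Polynomial.finsetSum_coeff, Polynomial.coeff_C_mul] at this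
  rw [this, tcoefR_eq, Nat.add_sub_cancel' ha, ← Polynomial.C_eq_natCast, Polynomial.coeff_C_mul]

lemma main_aux (μ ε : ℝ) (hε : ε ^ 2 = 1) (p a b : ℕ) (ha : a ≤ p) (V : Set ℝ) (hV : IsOpen V)
    (hV1 : ∀ s ∈ V, 0 < 1 + μ ^ 2 * s) (hV2 : ∀ s ∈ V, Real.sqrt (1 + μ ^ 2 * s) + ε ≠ 0)
    (X : Fin 4 → ℝ) (hX : Nq X ∈ V) :
    boxTilde μ
      (fun Y => tcoefR p a b Y / ((Real.sqrt (1 + μ ^ 2 * Nq Y) + ε : ℝ) : ℂ) ^ (p + 1)) X = 0 := by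
  have hr : ∀ s ∈ V, HasDerivAt (fun s => Real.sqrt (1 + μ ^ 2 * s))
      (μ ^ 2 / (2 * Real.sqrt (1 + μ ^ 2 * s))) s := by
    intro s hs
    have h0 : HasDerivAt (fun s : ℝ => 1 + μ ^ 2 * s) (μ ^ 2) s := by
      simpa using ((hasDerivAt_id s).const_mul (μ ^ 2)).const_add 1
    exact h0.sqrt (hV1 s hs).ne'
  have key := boxTilde_mul_KN μ p (tcoefR p a b) (T_diff p a b) (T_pd_diff p a b)
    (T_deg p a b ha) (T_lap p a b) V hV
    (fun s => ((Real.sqrt (1 + μ ^ 2 * s) + ε) ^ (p + 1))⁻¹)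
    (fun s => -(p + 1) * μ ^ 2 / 2 *
      ((Real.sqrt (1 + μ ^ 2 * s) + ε) ^ (p + 2) * Real.sqrt (1 + μ ^ 2 * s))⁻¹)
    (fun s => (p + 1) * μ ^ 4 / 4 *
      ((p + 2) * ((Real.sqrt (1 + μ ^ 2 * s) + ε) ^ (p + 3) * Real.sqrt (1 + μ ^ 2 * s) ^ 2)⁻¹
       + ((Real.sqrt (1 + μ ^ 2 * s) + ε) ^ (p + 2) * Real.sqrt (1 + μ ^ 2 * s) ^ 3)⁻¹))
    ?_ ?_ X hX ?_
  · convert key using 2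
    funext Y
    simp [KN, div_eq_mul_inv]
  · intro s hs
    have h1 := (((hr s hs).add_const ε).pow (p + 1)).inv (pow_ne_zero _ (hV2 s hs))
    refine h1.congr_deriv ?_
    have r0 := (Real.sqrt_pos.2 (hV1 s hs)).ne'
    have q0 := hV2 s hs
    simp only [Nat.add_sub_cancel, Pi.pow_apply]
    push_cast
    generalize Real.sqrt (1 + μ ^ 2 * s) = r at *
    generalize hq : r + ε = q at *
    field_simp
    try ring
  · intro s hs
    have r0 := (Real.sqrt_pos.2 (hV1 s hs)).ne'
    have q0 := hV2 s hs
    have h1 := (((((hr s hs).add_const ε).pow (p + 2)).mul (hr s hs)).inv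
      (mul_ne_zero (pow_ne_zero _ q0) r0)).const_mul (-((p : ℝ) + 1) * μ ^ 2 / 2)
    refine h1.congr_deriv ?_
    simp
    generalize Real.sqrt (1 + μ ^ 2 * s) = r at *
    generalize hq : r + ε = q at *
    field_simp
    try ring
  · intro s hs
    have r0 := (Real.sqrt_pos.2 (hV1 s hs)).ne'
    have q0 := hV2 s hs
    have hsq := Real.sq_sqrt (hV1 s hs).le
    generalize Real.sqrt (1 + μ ^ 2 * s) = r at *
    have e3 : (r + ε) ^ (p + 3) = (r + ε) ^ (p + 1) * (r + ε) ^ 2 := by ring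
    have e2 : (r + ε) ^ (p + 2) = (r + ε) ^ (p + 1) * (r + ε) := by ring
    rw [e3, e2]
    have z0 : (r + ε) ^ (p + 1) ≠ 0 := pow_ne_zero _ q0
    generalize (r + ε) ^ (p + 1) = z at *
    field_simp
    have hsw : μ ^ 2 * s = r ^ 2 - 1 := by linarith
    have gen : ∀ w : ℝ, w = r ^ 2 - 1 →
      (4 * ((p : ℝ) + 1) * (-(4 * (p + 2) * r ^ 2 * (r + ε)) + 2 * w * ((p + 2) * r + (r + ε))) +
        2 * (4 * p * r ^ 2 * (r + ε) * (p * r * (r + ε) + -((p + 1) * w)) +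
                (p + 1) * w *
                  (4 * r ^ 2 * (r + ε) * (-p + -2) + 2 ^ 2 * w * ((p + 2) * r + (r + ε))) +
              4 * r ^ 2 * (r + ε) * (p * r * (r + ε) + -((p + 1) * w)) * 3 +
            4 * 2 * r ^ 3 * (r + ε) ^ 2)) = 0 := by
      intro w hw
      subst hw
      rcases (by simpa using hε : ε = 1 ∨ ε = -1) with h | h <;> rw [h] <;> ring
    linear_combination μ ^ 2 * gen _ hsw

/-- For `μ > 0`, `l ∈ {0,1/2,1,…}` (encoded `p = 2l`) and `m,n ∈ {−l,…,l}` (encoded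
`a = l−m ≤ p`, `b = l−n ≤ p`), the function `φ⁺(X) = t^l_{n m̲}(X)/((1+μ²N(X))^{1/2}+1)^{2l+1}`
satisfies `□̃_μφ⁺ = 0` on `ℝ⁴`, and `φ⁻(X) = t^l_{n m̲}(X)/((1+μ²N(X))^{1/2}−1)^{2l+1}`
satisfies `□̃_μφ⁻ = 0` on `ℝ⁴ ∖ {0}`. -/
theorem stmt7 (μ : ℝ) (hμ : 0 < μ) (p a b : ℕ) (ha : a ≤ p) (hb : b ≤ p) :
    (∀ X : Fin 4 → ℝ,
      boxTilde μ
        (fun Y => tcoefR p a b Y / ((Real.sqrt (1 + μ ^ 2 * Nq Y) + 1 : ℝ) : ℂ) ^ (p + 1))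
        X = 0) ∧
    (∀ X : Fin 4 → ℝ, X ≠ 0 →
      boxTilde μ
        (fun Y => tcoefR p a b Y / ((Real.sqrt (1 + μ ^ 2 * Nq Y) - 1 : ℝ) : ℂ) ^ (p + 1))
        X = 0) := by
  constructor
  · intro X
    refine main_aux μ 1 (by norm_num) p a b ha {s | 0 < 1 + μ ^ 2 * s} ?_ ?_ ?_ X ?_
    · exact isOpen_lt continuous_const (by fun_prop)
    · exact fun s hs => hs
    · intro s _
      positivity
    · have : 0 ≤ Nq X := Finset.sum_nonneg fun i _ => sq_nonneg _
      show 0 < 1 + μ ^ 2 * Nq X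
      positivity
  · intro X hX
    have key := main_aux μ (-1) (by norm_num) p a b ha (Set.Ioi 0) isOpen_Ioi ?_ ?_ X ?_
    · simpa only [sub_eq_add_neg] using key
    · intro s hs
      have : (0 : ℝ) < s := hs
      positivity
    · intro s hs
      have hs : (0 : ℝ) < s := hs
      have : 1 < Real.sqrt (1 + μ ^ 2 * s) := by
        rw [Real.lt_sqrt (by norm_num)]
        have : 0 < μ ^ 2 * s := by positivity
        linarith
      linarith
    · show 0 < Nq X
      obtain ⟨i, hi⟩ := Function.ne_iff.1 hX
      exact Finset.sum_pos' (fun i _ => sq_nonneg _) ⟨i, Finset.mem_univ i, by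
        have : X i ≠ 0 := hi
        positivity⟩
end
end
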